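/- Let f : ℝ^d → ℝ be L-smooth, let μ > 0, and let f_μ be its Gaussian smoothing. Then for every x ∈ ℝ^d, E_u[ ‖ĝ_μ(x; u) − ∇f_μ(x)‖² ] ≤ 2(2d + 9) ‖∇f(x)‖² + μ² L² (d + 6)³, where u ~ N(0, I_d). -/

import Mathlib

open MeasureTheory ProbabilityTheory

/-- The standard multivariate Gaussian distribution `N(0, I_d)` on `ℝ^d`. -/
noncomputable def stdGaussian (d : ℕ) : Measure (EuclideanSpace ℝ (Fin d)) :=
  (Measure.pi fun _ : Fin d => gaussianReal 0 1).map
    (MeasurableEquiv.toLp 2 (Fin d → ℝ))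

open scoped NNReal InnerProductSpace

/-- Recursion for the exponentially tilted moments of a centered Gaussian. -/
lemma integral_pow_mul_exp_gaussianReal_add_two (v : ℝ≥0) (n : ℕ) (t : ℝ) :
    ∫ y, y ^ (n + 2) * Real.exp (t * y) ∂(gaussianReal 0 v) =
      v * (t * ∫ y, y ^ (n + 1) * Real.exp (t * y) ∂(gaussianReal 0 v) +
        (n + 1) * ∫ y, y ^ n * Real.exp (t * y) ∂(gaussianReal 0 v)) := by
  have hderiv (k : ℕ) (s : ℝ) :
      HasDerivAt (fun s => ∫ y, y ^ k * Real.exp (s * y) ∂(gaussianReal 0 v))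
        (∫ y, y ^ (k + 1) * Real.exp (s * y) ∂(gaussianReal 0 v)) s :=
    hasDerivAt_integral_pow_mul_exp_real (X := id)
      (by simp [integrableExpSet_id_gaussianReal]) k
  have hzero : (fun s => ∫ y, y ^ 0 * Real.exp (s * y) ∂(gaussianReal 0 v)) =
      fun s => Real.exp (v * s ^ 2 / 2) := by
    have h := mgf_fun_id_gaussianReal (μ := 0) (v := v)
    simpa [mgf, funext_iff] using h
  have hone (s : ℝ) : ∫ y, y ^ 1 * Real.exp (s * y) ∂(gaussianReal 0 v) =
      v * (s * ∫ y, y ^ 0 * Real.exp (s * y) ∂(gaussianReal 0 v)) := by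
    have h := hderiv 0 s
    rw [hzero] at h
    have h' : HasDerivAt (fun s : ℝ => Real.exp (v * s ^ 2 / 2))
        (Real.exp (v * s ^ 2 / 2) * (v * (2 * s) / 2)) s := by
      simpa using ((((hasDerivAt_id s).pow 2).const_mul (v : ℝ)).div_const 2).exp
    rw [congrFun hzero s, h.unique h']
    ring
  induction n generalizing t with
  | zero =>
    have h := hderiv 1 t
    rw [funext hone] at h
    rw [h.unique (((hasDerivAt_id' t).fun_mul (hderiv 0 t)).const_mul (v : ℝ))]
    simp only [zero_add, Nat.cast_zero]
    ring
  | succ n ih =>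
    have h := hderiv (n + 2) t
    rw [funext ih] at h
    rw [h.unique ((((hasDerivAt_id' t).fun_mul (hderiv (n + 1) t)).fun_add
      ((hderiv n t).const_mul ((n : ℝ) + 1))).const_mul (v : ℝ))]
    simp only [add_assoc n 1 1, Nat.reduceAdd]
    push_cast
    generalize ∫ y, y ^ (n + 2) * Real.exp (t * y) ∂(gaussianReal 0 v) = A
    generalize ∫ y, y ^ (n + 1) * Real.exp (t * y) ∂(gaussianReal 0 v) = B
    ring

lemma integral_pow_gaussianReal_add_two (v : ℝ≥0) (n : ℕ) :
    ∫ y, y ^ (n + 2) ∂(gaussianReal 0 v) = (n + 1) * v * ∫ y, y ^ n ∂(gaussianReal 0 v) := by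
  have h := integral_pow_mul_exp_gaussianReal_add_two v n 0
  simp only [zero_mul, Real.exp_zero, mul_one, zero_add] at h
  rw [h]
  ring

lemma integral_sq_gaussianReal (v : ℝ≥0) : ∫ y, y ^ 2 ∂(gaussianReal 0 v) = v := by
  simpa using integral_pow_gaussianReal_add_two v 0

lemma integral_pow_four_gaussianReal (v : ℝ≥0) :
    ∫ y, y ^ 4 ∂(gaussianReal 0 v) = 3 * v ^ 2 := by
  rw [integral_pow_gaussianReal_add_two v 2, integral_sq_gaussianReal]
  push_cast
  ring

lemma integral_pow_six_gaussianReal (v : ℝ≥0) :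
    ∫ y, y ^ 6 ∂(gaussianReal 0 v) = 15 * v ^ 3 := by
  rw [integral_pow_gaussianReal_add_two v 4, integral_pow_four_gaussianReal]
  push_cast
  ring

lemma integrable_pow_gaussianReal (v : ℝ≥0) (n : ℕ) :
    Integrable (fun y => y ^ n) (gaussianReal 0 v) := by
  have h := (memLp_id_gaussianReal (μ := 0) (v := v) n).integrable_norm_pow'
  refine (integrable_norm_iff (by fun_prop)).1 ?_
  simpa [norm_pow] using h

/-- First three moments of a chi-squared variable, as a partial sum of squares of independent
standard Gaussians. -/
lemma sum_sq_moments_pi_gaussianReal {ι : Type*} [Fintype ι] (s : Finset ι) :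
    let P := Measure.pi fun _ : ι => gaussianReal 0 1
    let S : (ι → ℝ) → ℝ := fun w => ∑ i ∈ s, w i ^ 2
    (Integrable S P ∧ Integrable (fun w => S w ^ 2) P ∧ Integrable (fun w => S w ^ 3) P) ∧
      ∫ w, S w ∂P = s.card ∧ ∫ w, S w ^ 2 ∂P = s.card * (s.card + 2) ∧
      ∫ w, S w ^ 3 ∂P = s.card * (s.card + 2) * (s.card + 4) := by
  classical
  intro P
  induction s using Finset.induction_on with
  | empty => simp
  | insert i s hi ih =>
    obtain ⟨⟨iS1, iS2, iS3⟩, eS1, eS2, eS3⟩ := ih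
    set S : (ι → ℝ) → ℝ := fun w => ∑ j ∈ s, w j ^ 2 with hS
    set X : (ι → ℝ) → ℝ := fun w => w i ^ 2 with hX
    have hmp : MeasurePreserving (fun w : ι → ℝ => w i) P (gaussianReal 0 1) :=
      measurePreserving_eval _ i
    have hint (n : ℕ) : Integrable (fun w : ι → ℝ => w i ^ n) P :=
      hmp.integrable_comp_of_integrable (integrable_pow_gaussianReal 1 n)
    have heq (n : ℕ) : ∫ w, w i ^ n ∂P = ∫ y, y ^ n ∂(gaussianReal 0 1) := by
      rw [← hmp.map_eq, integral_map hmp.measurable.aemeasurable (by fun_prop)]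
    have hXpow (n : ℕ) : (fun w => X w ^ n) = fun w : ι → ℝ => w i ^ (2 * n) := by
      funext w; simp [hX, pow_mul]
    have iX1 : Integrable X P := hint 2
    have iX2 : Integrable (fun w => X w ^ 2) P := by rw [hXpow]; exact hint _
    have iX3 : Integrable (fun w => X w ^ 3) P := by rw [hXpow]; exact hint _
    have eX1 : ∫ w, X w ∂P = 1 := by
      rw [hX, heq, integral_sq_gaussianReal]; simp
    have eX2 : ∫ w, X w ^ 2 ∂P = 3 := by
      rw [hXpow, heq, integral_pow_four_gaussianReal]; simp
    have eX3 : ∫ w, X w ^ 3 ∂P = 15 := by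
      rw [hXpow, heq, integral_pow_six_gaussianReal]; simp
    have hind : IndepFun X S P := by
      have h : iIndepFun (fun j (w : ι → ℝ) => w j ^ 2) P :=
        iIndepFun_pi (X := fun _ y => y ^ 2) (fun _ => by fun_prop)
      have h' := (h.indepFun_finsetSum_of_notMem (fun j => by fun_prop) hi).symm
      convert h' using 1
      funext w; simp [hS]
    have hm2 : Measurable fun y : ℝ => y ^ 2 := by fun_prop
    have ind12 : IndepFun X (fun w => S w ^ 2) P := hind.comp measurable_id hm2
    have ind21 : IndepFun (fun w => X w ^ 2) S P := hind.comp hm2 measurable_id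
    have i11 : Integrable (fun w => X w * S w) P := hind.integrable_mul iX1 iS1
    have i12 : Integrable (fun w => X w * S w ^ 2) P := ind12.integrable_mul iX1 iS2
    have i21 : Integrable (fun w => X w ^ 2 * S w) P := ind21.integrable_mul iX2 iS1
    have e11 : ∫ w, X w * S w ∂P = s.card := by
      rw [hind.integral_fun_mul_eq_mul_integral iX1.1 iS1.1, eX1, eS1, one_mul]
    have e12 : ∫ w, X w * S w ^ 2 ∂P = s.card * (s.card + 2) := by
      rw [ind12.integral_fun_mul_eq_mul_integral iX1.1 iS2.1, eX1, eS2, one_mul]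
    have e21 : ∫ w, X w ^ 2 * S w ∂P = 3 * s.card := by
      rw [ind21.integral_fun_mul_eq_mul_integral iX2.1 iS1.1, eX2, eS1]
    have hadd (w : ι → ℝ) : ∑ j ∈ insert i s, w j ^ 2 = X w + S w := by
      simp [hX, hS, Finset.sum_insert hi]
    have hsq (w : ι → ℝ) : (X w + S w) ^ 2 = X w ^ 2 + 2 * (X w * S w) + S w ^ 2 := by ring
    have hcube (w : ι → ℝ) : (X w + S w) ^ 3 =
        X w ^ 3 + 3 * (X w ^ 2 * S w) + 3 * (X w * S w ^ 2) + S w ^ 3 := by ring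
    have i2 := i11.const_mul 2
    have i3 := i21.const_mul 3
    have i4 := i12.const_mul 3
    simp only [hadd, hsq, hcube, Finset.card_insert_of_notMem hi]
    refine ⟨⟨iX1.fun_add iS1, (iX2.fun_add i2).fun_add iS2,
      ((iX3.fun_add i3).fun_add i4).fun_add iS3⟩, ?_, ?_, ?_⟩
    · rw [integral_add iX1 iS1, eX1, eS1]
      push_cast; ring
    · rw [integral_add (iX2.fun_add i2) iS2, integral_add iX2 i2, integral_const_mul, eX2, e11, eS2]
      push_cast; ring
    · rw [integral_add ((iX3.fun_add i3).fun_add i4) iS3, integral_add (iX3.fun_add i3) i4,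
        integral_add iX3 i3, integral_const_mul, integral_const_mul, eX3, e21, e12, eS3]
      push_cast; ring

lemma stdGaussian_eq_stdGaussian_euclideanSpace (d : ℕ) :
    _root_.stdGaussian d = ProbabilityTheory.stdGaussian (EuclideanSpace ℝ (Fin d)) :=
  map_pi_eq_stdGaussian

instance isGaussian_stdGaussian_euclideanSpace (d : ℕ) : IsGaussian (_root_.stdGaussian d) := by
  rw [stdGaussian_eq_stdGaussian_euclideanSpace]
  infer_instance

lemma integrable_norm_pow_stdGaussian (d n : ℕ) :
    Integrable (fun u => ‖u‖ ^ n) (_root_.stdGaussian d) :=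
  (IsGaussian.memLp_id (_root_.stdGaussian d) n (by simp)).integrable_norm_pow'

lemma integral_norm_sq_stdGaussian (d : ℕ) : ∫ u, ‖u‖ ^ 2 ∂(_root_.stdGaussian d) = d := by
  have h := (sum_sq_moments_pi_gaussianReal (Finset.univ : Finset (Fin d))).2.1
  rw [_root_.stdGaussian, integral_map_equiv]
  simpa [EuclideanSpace.norm_sq_eq] using h

lemma integral_norm_pow_six_stdGaussian (d : ℕ) :
    ∫ u, ‖u‖ ^ 6 ∂(_root_.stdGaussian d) = d * (d + 2) * (d + 4) := by
  have h := (sum_sq_moments_pi_gaussianReal (Finset.univ : Finset (Fin d))).2.2.2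
  have hpow (u : EuclideanSpace ℝ (Fin d)) : ‖u‖ ^ 6 = (‖u‖ ^ 2) ^ 3 := by ring
  simp_rw [_root_.stdGaussian, integral_map_equiv, hpow]
  simpa [EuclideanSpace.norm_sq_eq] using h

lemma integral_norm_stdGaussian_le (d : ℕ) :
    ∫ u, ‖u‖ ∂(_root_.stdGaussian d) ≤ (d + 1) / 2 := by
  have i1 : Integrable (fun u => ‖u‖) (_root_.stdGaussian d) := by
    simpa using integrable_norm_pow_stdGaussian d 1
  have i2 := integrable_norm_pow_stdGaussian d 2
  calc ∫ u, ‖u‖ ∂(_root_.stdGaussian d)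
      ≤ ∫ u, (‖u‖ ^ 2 + 1) / 2 ∂(_root_.stdGaussian d) :=
        integral_mono i1 ((i2.add (integrable_const 1)).div_const 2)
          fun u => by nlinarith [sq_nonneg (‖u‖ - 1)]
    _ = (d + 1) / 2 := by
        rw [integral_div, integral_add i2 (integrable_const 1), integral_norm_sq_stdGaussian]
        simp

variable {d : ℕ}

lemma map_inner_stdGaussian (g : EuclideanSpace ℝ (Fin d)) :
    (_root_.stdGaussian d).map (fun u => ⟪g, u⟫_ℝ) = gaussianReal 0 (‖g‖₊ ^ 2) := by
  have h := IsGaussian.map_eq_gaussianReal (μ := _root_.stdGaussian d) (innerSL ℝ g)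
  rw [stdGaussian_eq_stdGaussian_euclideanSpace] at h ⊢
  rw [variance_dual_stdGaussian, integral_strongDual_stdGaussian, innerSL_apply_norm] at h
  have hv : (‖g‖ ^ 2).toNNReal = ‖g‖₊ ^ 2 := by
    ext; simp
  rw [hv] at h
  exact h

lemma integral_inner_pow_four_stdGaussian (g : EuclideanSpace ℝ (Fin d)) :
    ∫ u, ⟪g, u⟫_ℝ ^ 4 ∂(_root_.stdGaussian d) = 3 * ‖g‖ ^ 4 := by
  have h := integral_pow_four_gaussianReal (‖g‖₊ ^ 2)
  rw [← map_inner_stdGaussian, integral_map (by fun_prop) (by fun_prop)] at h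
  rw [h]
  push_cast
  ring

lemma integrable_inner_pow_four_stdGaussian (g : EuclideanSpace ℝ (Fin d)) :
    Integrable (fun u => ⟪g, u⟫_ℝ ^ 4) (_root_.stdGaussian d) := by
  refine ((integrable_norm_pow_stdGaussian d 4).const_mul (‖g‖ ^ 4)).mono' (by fun_prop)
    (.of_forall fun u => ?_)
  rw [norm_pow, ← mul_pow]
  exact pow_le_pow_left₀ (norm_nonneg _) (norm_inner_le_norm g u) 4

/-- Polarization of the fourth moment of the one-dimensional marginals. -/
lemma integral_inner_sq_mul_inner_sq_stdGaussian (g h : EuclideanSpace ℝ (Fin d)) :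
    ∫ u, ⟪g, u⟫_ℝ ^ 2 * ⟪h, u⟫_ℝ ^ 2 ∂(_root_.stdGaussian d) =
      ‖g‖ ^ 2 * ‖h‖ ^ 2 + 2 * ⟪g, h⟫_ℝ ^ 2 := by
  have hpol (u : EuclideanSpace ℝ (Fin d)) : ⟪g, u⟫_ℝ ^ 2 * ⟪h, u⟫_ℝ ^ 2 =
      (⟪g + h, u⟫_ℝ ^ 4 + ⟪g - h, u⟫_ℝ ^ 4 + -2 * ⟪g, u⟫_ℝ ^ 4 + -2 * ⟪h, u⟫_ℝ ^ 4) / 12 := by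
    rw [inner_add_left, inner_sub_left]
    ring
  have i1 := integrable_inner_pow_four_stdGaussian (g + h)
  have i2 := integrable_inner_pow_four_stdGaussian (g - h)
  have i3 := (integrable_inner_pow_four_stdGaussian g).const_mul (-2)
  have i4 := (integrable_inner_pow_four_stdGaussian h).const_mul (-2)
  have hadd : ‖g + h‖ ^ 4 = (‖g‖ ^ 2 + 2 * ⟪g, h⟫_ℝ + ‖h‖ ^ 2) ^ 2 := by
    rw [← norm_add_sq_real]; ring
  have hsub : ‖g - h‖ ^ 4 = (‖g‖ ^ 2 - 2 * ⟪g, h⟫_ℝ + ‖h‖ ^ 2) ^ 2 := by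
    rw [← norm_sub_sq_real]; ring
  simp_rw [hpol]
  rw [integral_div, integral_add ((i1.fun_add i2).fun_add i3) i4, integral_add (i1.fun_add i2) i3,
    integral_add i1 i2, integral_const_mul, integral_const_mul]
  simp only [integral_inner_pow_four_stdGaussian]
  rw [hadd, hsub]
  ring

lemma integrable_inner_sq_mul_norm_sq_stdGaussian (g : EuclideanSpace ℝ (Fin d)) :
    Integrable (fun u => ⟪g, u⟫_ℝ ^ 2 * ‖u‖ ^ 2) (_root_.stdGaussian d) := by
  refine ((integrable_norm_pow_stdGaussian d 4).const_mul (‖g‖ ^ 2)).mono' (by fun_prop)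
    (.of_forall fun u => ?_)
  rw [norm_mul, norm_pow, norm_pow, norm_norm]
  calc ‖⟪g, u⟫_ℝ‖ ^ 2 * ‖u‖ ^ 2 ≤ (‖g‖ * ‖u‖) ^ 2 * ‖u‖ ^ 2 := by
        gcongr; exact norm_inner_le_norm g u
    _ = ‖g‖ ^ 2 * ‖u‖ ^ 4 := by ring

lemma integral_inner_sq_mul_norm_sq_stdGaussian (g : EuclideanSpace ℝ (Fin d)) :
    ∫ u, ⟪g, u⟫_ℝ ^ 2 * ‖u‖ ^ 2 ∂(_root_.stdGaussian d) = (d + 2) * ‖g‖ ^ 2 := by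
  have hb (u : EuclideanSpace ℝ (Fin d)) : ‖u‖ ^ 2 =
      ∑ i, ⟪EuclideanSpace.basisFun (Fin d) ℝ i, u⟫_ℝ ^ 2 := by
    simpa using ((EuclideanSpace.basisFun (Fin d) ℝ).sum_sq_norm_inner_right u).symm
  have hint (h : EuclideanSpace ℝ (Fin d)) :
      Integrable (fun u => ⟪g, u⟫_ℝ ^ 2 * ⟪h, u⟫_ℝ ^ 2) (_root_.stdGaussian d) := by
    refine ((integrable_inner_pow_four_stdGaussian g).add
      (integrable_inner_pow_four_stdGaussian h)).mono' (by fun_prop) (.of_forall fun u => ?_)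
    rw [Real.norm_of_nonneg (by positivity)]
    simp only [Pi.add_apply]
    nlinarith [sq_nonneg (⟪g, u⟫_ℝ ^ 2 - ⟪h, u⟫_ℝ ^ 2), sq_nonneg (⟪g, u⟫_ℝ ^ 2),
      sq_nonneg (⟪h, u⟫_ℝ ^ 2)]
  have hgb : ∑ i, ⟪g, EuclideanSpace.basisFun (Fin d) ℝ i⟫_ℝ ^ 2 = ‖g‖ ^ 2 := by
    rw [hb g]; simp_rw [real_inner_comm]
  simp_rw [hb, Finset.mul_sum]
  rw [integral_finsetSum _ fun i _ => hint _]
  simp_rw [integral_inner_sq_mul_inner_sq_stdGaussian, Finset.sum_add_distrib, ← Finset.mul_sum,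
    hgb, OrthonormalBasis.norm_eq_one]
  rw [← hb g]
  simp
  ring

/-- Quadratic Taylor bound for a function with Lipschitz derivative. -/
lemma abs_sub_sub_fderiv_le_of_lipschitz_fderiv {E : Type*} [NormedAddCommGroup E]
    [NormedSpace ℝ E] {f : E → ℝ} {K : ℝ} (hf : Differentiable ℝ f)
    (hK : ∀ x y, ‖fderiv ℝ f x - fderiv ℝ f y‖ ≤ K * ‖x - y‖) (x v : E) :
    |f (x + v) - f x - fderiv ℝ f x v| ≤ K / 2 * ‖v‖ ^ 2 := by
  have hder (t : ℝ) : HasDerivAt (fun t : ℝ => f (x + t • v) - f x - t * fderiv ℝ f x v)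
      (fderiv ℝ f (x + t • v) v - fderiv ℝ f x v) t := by
    have hline : HasDerivAt (fun t : ℝ => x + t • v) v t := by
      simpa using ((hasDerivAt_id t).smul_const v).const_add x
    have h := (hf (x + t • v)).hasFDerivAt.comp_hasDerivAt t hline
    simpa using (h.sub_const (f x)).fun_sub ((hasDerivAt_id t).mul_const (fderiv ℝ f x v))
  have hB (t : ℝ) : HasDerivAt (fun t : ℝ => K / 2 * ‖v‖ ^ 2 * t ^ 2) (K * ‖v‖ ^ 2 * t) t := by
    refine (((hasDerivAt_id' t).fun_pow 2).const_mul (K / 2 * ‖v‖ ^ 2)).congr_deriv ?_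
    push_cast
    ring
  have h := image_norm_le_of_norm_deriv_right_le_deriv_boundary (a := 0) (b := 1)
    (fun t _ => (hder t).continuousAt.continuousWithinAt)
    (fun t _ => (hder t).hasDerivWithinAt) (by simp) hB (fun t ht => ?_)
    (Set.right_mem_Icc.2 zero_le_one)
  · simpa using h
  · calc ‖fderiv ℝ f (x + t • v) v - fderiv ℝ f x v‖
        ≤ ‖fderiv ℝ f (x + t • v) - fderiv ℝ f x‖ * ‖v‖ :=
          (fderiv ℝ f (x + t • v) - fderiv ℝ f x).le_opNorm v
      _ ≤ K * ‖x + t • v - x‖ * ‖v‖ := by gcongr; exact hK _ _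
      _ = K * ‖v‖ ^ 2 * t := by
          rw [add_sub_cancel_left, norm_smul, Real.norm_of_nonneg ht.1]; ring

/-- The derivative of the Gaussian smoothing of a smooth function stays close to the derivative
of the function. -/
lemma norm_fderiv_gaussian_smoothing_sub_le {f : EuclideanSpace ℝ (Fin d) → ℝ} {K μ : ℝ}
    (hK0 : 0 ≤ K) (hμ : 0 < μ) (hf : Differentiable ℝ f)
    (hK : ∀ x y, ‖fderiv ℝ f x - fderiv ℝ f y‖ ≤ K * ‖x - y‖) (x : EuclideanSpace ℝ (Fin d)) :
    ‖fderiv ℝ (fun y => ∫ u, f (y + μ • u) ∂(_root_.stdGaussian d)) x - fderiv ℝ f x‖ ≤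
      K * μ * ((d + 1) / 2) := by
  have i1 : Integrable (fun u => ‖u‖) (_root_.stdGaussian d) := by
    simpa using integrable_norm_pow_stdGaussian d 1
  have i2 := integrable_norm_pow_stdGaussian d 2
  have hcont : Continuous (fderiv ℝ f) :=
    (LipschitzWith.of_dist_le_mul (K := K.toNNReal) fun x y => by
      simpa [dist_eq_norm, hK0] using hK x y).continuous
  have hfc : Continuous f := hf.continuous
  have hbound (y u : EuclideanSpace ℝ (Fin d)) :
      ‖fderiv ℝ f (y + μ • u) - fderiv ℝ f x‖ ≤ K * (‖y - x‖ + μ * ‖u‖) := by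
    refine (hK _ _).trans ?_
    gcongr
    calc ‖y + μ • u - x‖ = ‖(y - x) + μ • u‖ := by congr 1; abel
      _ ≤ ‖y - x‖ + μ * ‖u‖ := by
        refine (norm_add_le _ _).trans_eq ?_
        rw [norm_smul, Real.norm_of_nonneg hμ.le]
  have hint' : Integrable (fun u => K * (μ * ‖u‖)) (_root_.stdGaussian d) :=
    (i1.const_mul μ).const_mul K
  have hint_f : Integrable (fun u => f (x + μ • u)) (_root_.stdGaussian d) := by
    refine (((integrable_const |f x|).add
      (i1.const_mul (‖fderiv ℝ f x‖ * μ))).add (i2.const_mul (K / 2 * μ ^ 2))).mono'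
      (by fun_prop) (.of_forall fun u => ?_)
    have h1 := abs_sub_sub_fderiv_le_of_lipschitz_fderiv hf hK x (μ • u)
    have h2 := (fderiv ℝ f x).le_opNorm (μ • u)
    rw [norm_smul, Real.norm_of_nonneg hμ.le] at h1 h2
    rw [Real.norm_eq_abs] at h2 ⊢
    have h3 := abs_add_three (f x) (fderiv ℝ f x (μ • u))
      (f (x + μ • u) - f x - fderiv ℝ f x (μ • u))
    have h4 : f x + fderiv ℝ f x (μ • u) + (f (x + μ • u) - f x - fderiv ℝ f x (μ • u)) =
      f (x + μ • u) := by ring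
    rw [h4] at h3
    simp only [Pi.add_apply]
    linarith
  have hint_fderiv_sub : Integrable (fun u => fderiv ℝ f (x + μ • u) - fderiv ℝ f x)
      (_root_.stdGaussian d) :=
    hint'.mono' (by fun_prop) (.of_forall fun u => by simpa using hbound x u)
  have hint_fderiv : Integrable (fun u => fderiv ℝ f (x + μ • u)) (_root_.stdGaussian d) := by
    simpa using hint_fderiv_sub.fun_add (integrable_const (fderiv ℝ f x))
  have hder : HasFDerivAt (fun y => ∫ u, f (y + μ • u) ∂(_root_.stdGaussian d))
      (∫ u, fderiv ℝ f (x + μ • u) ∂(_root_.stdGaussian d)) x := by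
    refine hasFDerivAt_integral_of_dominated_of_fderiv_le (𝕜 := ℝ)
      (F' := fun y u => fderiv ℝ f (y + μ • u))
      (bound := fun u => ‖fderiv ℝ f x‖ + K * (1 + μ * ‖u‖)) (Metric.ball_mem_nhds x one_pos)
      (.of_forall fun y => by fun_prop) hint_f (by fun_prop) (.of_forall fun u y hy => ?_)
      ((integrable_const _).add (((integrable_const 1).add (i1.const_mul μ)).const_mul K))
      (.of_forall fun u y _ => ?_)
    · have hy' : ‖y - x‖ ≤ 1 := (mem_ball_iff_norm.1 hy).le
      calc ‖fderiv ℝ f (y + μ • u)‖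
          ≤ ‖fderiv ℝ f x‖ + ‖fderiv ℝ f (y + μ • u) - fderiv ℝ f x‖ :=
            norm_le_norm_add_norm_sub' _ _
        _ ≤ ‖fderiv ℝ f x‖ + K * (1 + μ * ‖u‖) := by
            gcongr
            exact (hbound y u).trans (by gcongr)
    · exact (hasFDerivAt_comp_add_right _).2 (hf (y + μ • u)).hasFDerivAt
  have hsub : ∫ u, fderiv ℝ f (x + μ • u) ∂(_root_.stdGaussian d) - fderiv ℝ f x =
      ∫ u, (fderiv ℝ f (x + μ • u) - fderiv ℝ f x) ∂(_root_.stdGaussian d) := by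
    rw [integral_sub hint_fderiv (integrable_const _)]
    simp
  rw [hder.fderiv, hsub]
  calc ‖∫ u, (fderiv ℝ f (x + μ • u) - fderiv ℝ f x) ∂(_root_.stdGaussian d)‖
      ≤ ∫ u, K * (μ * ‖u‖) ∂(_root_.stdGaussian d) :=
        norm_integral_le_of_norm_le hint' (.of_forall fun u => by simpa using hbound x u)
    _ = K * μ * ∫ u, ‖u‖ ∂(_root_.stdGaussian d) := by
        rw [integral_const_mul, integral_const_mul, mul_assoc]
    _ ≤ K * μ * ((d + 1) / 2) := by
        gcongr
        exact integral_norm_stdGaussian_le d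

/-- Pointwise splitting of the estimator error into the linear part, the Taylor remainder `r`
and the bias `h`. -/
lemma norm_smul_sub_add_sq_le {E : Type*} [NormedAddCommGroup E] [InnerProductSpace ℝ E]
    (g h u : E) (r : ℝ) :
    ‖(⟪g, u⟫_ℝ + r) • u - (g + h)‖ ^ 2 ≤
      2 * (⟪g, u⟫_ℝ ^ 2 * ‖u‖ ^ 2) + 2 * ‖g‖ ^ 2 + 4 * (r ^ 2 * ‖u‖ ^ 2) + 4 * ‖h‖ ^ 2 := by
  have two_sq (a b : E) : ‖a + b‖ ^ 2 ≤ 2 * ‖a‖ ^ 2 + 2 * ‖b‖ ^ 2 := by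
    linarith [parallelogram_law_with_norm ℝ a b, mul_self_nonneg ‖a - b‖, sq ‖a + b‖,
      sq ‖a‖, sq ‖b‖]
  have hsplit : (⟪g, u⟫_ℝ + r) • u - (g + h) = (⟪g, u⟫_ℝ • u - g) + (r • u + -h) := by
    rw [add_smul]; abel
  have hlin : ‖⟪g, u⟫_ℝ • u - g‖ ^ 2 ≤ ⟪g, u⟫_ℝ ^ 2 * ‖u‖ ^ 2 + ‖g‖ ^ 2 := by
    rw [norm_sub_sq_real, real_inner_smul_left, real_inner_comm, norm_smul, mul_pow,
      Real.norm_eq_abs, sq_abs]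
    nlinarith [sq_nonneg ⟪g, u⟫_ℝ]
  have hrem : ‖r • u + -h‖ ^ 2 ≤ 2 * (r ^ 2 * ‖u‖ ^ 2) + 2 * ‖h‖ ^ 2 := by
    refine (two_sq _ _).trans_eq ?_
    rw [norm_neg, norm_smul, mul_pow, Real.norm_eq_abs, sq_abs]
  rw [hsplit]
  linarith [two_sq (⟪g, u⟫_ℝ • u - g) (r • u + -h)]

/-- Variance-type bound for the two-point Gaussian gradient estimator:
`E_u[‖ĝ_μ(x; u) − ∇f_μ(x)‖²] ≤ 2(2d + 9)‖∇f(x)‖² + μ² L² (d + 6)³`. -/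
theorem gaussian_estimator_variance_bound
    (d : ℕ) (L μ : ℝ) (hμ : 0 < μ)
    (f : EuclideanSpace ℝ (Fin d) → ℝ)
    (hdiff : Differentiable ℝ f)
    (hlip : ∀ x y, ‖gradient f x - gradient f y‖ ≤ L * ‖x - y‖)
    (fμ : EuclideanSpace ℝ (Fin d) → ℝ)
    (hfμ : ∀ x, fμ x = ∫ u, f (x + μ • u) ∂(stdGaussian d))
    (x : EuclideanSpace ℝ (Fin d)) :
    ∫ u, ‖((f (x + μ • u) - f x) / μ) • u - gradient fμ x‖ ^ 2 ∂(stdGaussian d)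
      ≤ 2 * (2 * (d : ℝ) + 9) * ‖gradient f x‖ ^ 2 + μ ^ 2 * L ^ 2 * ((d : ℝ) + 6) ^ 3 := by
  have hK (y z : EuclideanSpace ℝ (Fin d)) :
      ‖fderiv ℝ f y - fderiv ℝ f z‖ ≤ |L| * ‖y - z‖ := by
    rw [← toDual_gradient, ← toDual_gradient, ← map_sub, LinearIsometryEquiv.norm_map]
    exact (hlip y z).trans (by gcongr; exact le_abs_self L)
  set g := gradient f x with hg
  set h := gradient fμ x - g with hh
  have hbias : ‖h‖ ≤ |L| * μ * ((d + 1) / 2) := by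
    have := norm_fderiv_gaussian_smoothing_sub_le (abs_nonneg L) hμ hdiff hK x
    rwa [← funext hfμ, ← toDual_gradient, ← toDual_gradient, ← map_sub,
      LinearIsometryEquiv.norm_map] at this
  have hbias_sq : 4 * ‖h‖ ^ 2 ≤ μ ^ 2 * L ^ 2 * ((d : ℝ) + 1) ^ 2 := by
    calc 4 * ‖h‖ ^ 2 ≤ 4 * (|L| * μ * ((d + 1) / 2)) ^ 2 := by gcongr
      _ = μ ^ 2 * L ^ 2 * ((d : ℝ) + 1) ^ 2 := by rw [mul_pow, mul_pow, sq_abs]; ring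
  have hpt (u : EuclideanSpace ℝ (Fin d)) :
      ‖((f (x + μ • u) - f x) / μ) • u - gradient fμ x‖ ^ 2 ≤
        2 * (⟪g, u⟫_ℝ ^ 2 * ‖u‖ ^ 2) + μ ^ 2 * L ^ 2 * ‖u‖ ^ 6 +
          (2 * ‖g‖ ^ 2 + 4 * ‖h‖ ^ 2) := by
    set r := (f (x + μ • u) - f x) / μ - ⟪g, u⟫_ℝ with hr
    have hr_le : |r| ≤ |L| / 2 * μ * ‖u‖ ^ 2 := by
      have ht := abs_sub_sub_fderiv_le_of_lipschitz_fderiv hdiff hK x (μ • u)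
      have hrμ : f (x + μ • u) - f x - fderiv ℝ f x (μ • u) = μ * r := by
        rw [← inner_gradient_left, inner_smul_right, hr]
        field_simp
        simp [hg]
      rw [hrμ, abs_mul, abs_of_pos hμ, norm_smul, Real.norm_of_nonneg hμ.le] at ht
      refine le_of_mul_le_mul_left (ht.trans_eq ?_) hμ
      ring
    have hr_sq : 4 * (r ^ 2 * ‖u‖ ^ 2) ≤ μ ^ 2 * L ^ 2 * ‖u‖ ^ 6 := by
      calc 4 * (r ^ 2 * ‖u‖ ^ 2) = 4 * (|r| ^ 2 * ‖u‖ ^ 2) := by rw [sq_abs]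
        _ ≤ 4 * ((|L| / 2 * μ * ‖u‖ ^ 2) ^ 2 * ‖u‖ ^ 2) := by gcongr
        _ = μ ^ 2 * |L| ^ 2 * ‖u‖ ^ 6 := by ring
        _ = μ ^ 2 * L ^ 2 * ‖u‖ ^ 6 := by rw [sq_abs]
    have hsplit := norm_smul_sub_add_sq_le g h u r
    rw [hr, hh, add_sub_cancel, add_sub_cancel, ← hr, ← hh] at hsplit
    linarith
  have i1 := (integrable_inner_sq_mul_norm_sq_stdGaussian g).const_mul 2
  have i2 := (integrable_norm_pow_stdGaussian d 6).const_mul (μ ^ 2 * L ^ 2)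
  have i3 := integrable_const (μ := _root_.stdGaussian d) (2 * ‖g‖ ^ 2 + 4 * ‖h‖ ^ 2)
  have hmono := integral_mono_of_nonneg (μ := _root_.stdGaussian d)
    (.of_forall fun u => by positivity) ((i1.fun_add i2).fun_add i3) (.of_forall hpt)
  refine hmono.trans ?_
  rw [integral_add (i1.fun_add i2) i3, integral_add i1 i2, integral_const_mul, integral_const_mul,
    integral_inner_sq_mul_norm_sq_stdGaussian, integral_norm_pow_six_stdGaussian]
  simp only [integral_const, probReal_univ, one_smul]
  have hd : (0 : ℝ) ≤ d := Nat.cast_nonneg d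
  have hgrad : 2 * (((d : ℝ) + 2) * ‖g‖ ^ 2) + 2 * ‖g‖ ^ 2 ≤ 2 * (2 * d + 9) * ‖g‖ ^ 2 := by
    nlinarith [sq_nonneg ‖g‖, mul_nonneg hd (sq_nonneg ‖g‖)]
  have hpoly : (d : ℝ) * (d + 2) * (d + 4) + (d + 1) ^ 2 ≤ (d + 6) ^ 3 := by
    nlinarith [sq_nonneg (d : ℝ)]
  have hsmooth := mul_le_mul_of_nonneg_left hpoly (by positivity : 0 ≤ μ ^ 2 * L ^ 2)
  linarith
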